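/- Assume SSCP and SLS, and let t_l < t'_l < t_r < t'_r in T. Suppose (x̲_l, x̲_r) is the least element of E(t_l,t_r), (y̲_l, y̲_r) is the least element of E(t'_l,t_r), and (z̲_l, z̲_r) is the least element of E(t_l,t'_r) (coordinatewise order). Then y̲_l ≥ x̲_l and z̲_r ≥ x̲_r: the least equilibrium platforms are increasing in the candidates' ideal policies. -/

import Mathlib

/-!
Against a fixed opponent platform `y`, every best response of a candidate with ideal policy `t`
lies between `t` and `y` (including `t`, excluding `y`), so in equilibrium
`tl ≤ xl < xr ≤ tr`. On that range SSCP says that *every* selection from a best-response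
correspondence is increasing in the opponent's platform, and SLS says that every best response
increases with the ideal policy.

To compare least equilibria, let `q` be the least equilibrium after one ideal policy has been
raised. Under the original ideal policies some best response to each component of `q` lies below
the other component (`brL_mono_type`, `brR_mono_type`). Hence a suitable composite of selections,
`xl ↦ sl (sr xl)`, is an increasing self-map of `[tl, q.1]`, and Tarski's theorem produces an
equilibrium of the original game below `q` (`exists_eq_le`); the least one is then below `q` too.
The composite is only available when `q.1 < tr`. This can fail when `tr` is raised, but if
`tr ≤ q.1` then `xb.2 ≤ tr ≤ q.1 < q.2` holds anyway.
-/

open Set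

/-- The policy space `T = [0,1] ⊆ ℝ`. -/
def T : Set ℝ := Set.Icc 0 1

/-- Hypotheses on the beliefs `F` about the median voter's ideal policy:
continuous, strictly increasing on `T`, with values in `[0,1]` (full support). -/
def Fhyp (F : ℝ → ℝ) : Prop :=
  ContinuousOn F T ∧ StrictMonoOn F T ∧ ∀ x ∈ T, 0 ≤ F x ∧ F x ≤ 1

/-- The probability that candidate `l` wins given platforms `xl, xr`. -/
noncomputable def P (F : ℝ → ℝ) (xl xr : ℝ) : ℝ :=
  if xl < xr then F ((xl + xr) / 2)
  else if xl = xr then 1 / 2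
  else 1 - F ((xl + xr) / 2)

/-- Hypotheses on the payoff `u x t`: jointly continuous on `T × T`, strictly
concave in the platform, and uniquely maximized at the ideal policy. -/
def uhyp (u : ℝ → ℝ → ℝ) : Prop :=
  ContinuousOn (fun p : ℝ × ℝ => u p.1 p.2) (T ×ˢ T) ∧
  (∀ t ∈ T, StrictConcaveOn ℝ T (fun x => u x t)) ∧
  (∀ t ∈ T, ∀ x ∈ T, x ≠ t → u x t < u t t)

/-- Expected payoff of a candidate with ideal policy `t` given platforms `xl, xr`. -/
noncomputable def U (F : ℝ → ℝ) (u : ℝ → ℝ → ℝ) (t xl xr : ℝ) : ℝ :=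
  P F xl xr * u xl t + (1 - P F xl xr) * u xr t

/-- Best-response set of candidate `l` with ideal policy `t` to opponent platform `x`. -/
def brL (F : ℝ → ℝ) (u : ℝ → ℝ → ℝ) (t x : ℝ) : Set ℝ :=
  {y ∈ T | ∀ z ∈ T, U F u t z x ≤ U F u t y x}

/-- Best-response set of candidate `r` with ideal policy `t` to opponent platform `x`. -/
def brR (F : ℝ → ℝ) (u : ℝ → ℝ → ℝ) (t x : ℝ) : Set ℝ :=
  {y ∈ T | ∀ z ∈ T, U F u t x z ≤ U F u t x y}

/-- The set of Nash equilibria given ideal policies `tl, tr`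
(ordered coordinatewise via the product order on `ℝ × ℝ`). -/
def E (F : ℝ → ℝ) (u : ℝ → ℝ → ℝ) (tl tr : ℝ) : Set (ℝ × ℝ) :=
  {p | p.1 ∈ brL F u tl p.2 ∧ p.2 ∈ brR F u tr p.1}

/-- Strict single crossing property (SSCP). -/
def SSCP (F : ℝ → ℝ) (u : ℝ → ℝ → ℝ) : Prop :=
  ∀ t x x' y y' t' : ℝ, t ∈ T → x ∈ T → x' ∈ T → y ∈ T → y' ∈ T → t' ∈ T →
    t ≤ x → x < x' → x' < y → y < y' → y' ≤ t' →
    (U F u t x' y ≥ U F u t x y → U F u t x' y' > U F u t x y') ∧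
    (U F u t' x' y ≥ U F u t' x' y' → U F u t' x y > U F u t' x y')

/-- Strict log supermodularity (SLS). -/
def SLS (u : ℝ → ℝ → ℝ) : Prop :=
  ∀ t t' x x' y : ℝ, t ∈ T → t' ∈ T → x ∈ T → x' ∈ T → y ∈ T →
    ((t < t' ∧ t' ≤ x ∧ x < x' ∧ x' < y) ∨ (y < x ∧ x < x' ∧ x' ≤ t ∧ t < t')) →
    (u x' t' - u y t') / (u x t' - u y t') > (u x' t - u y t) / (u x t - u y t)

/-- The expected policy function. -/
noncomputable def pol (F : ℝ → ℝ) (xl xr : ℝ) : ℝ :=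
  P F xl xr * xl + (1 - P F xl xr) * xr

/-! ### Best responses to a fixed platform -/

lemma one_sub_P (F : ℝ → ℝ) (x y : ℝ) : 1 - P F x y = P F y x := by
  unfold P
  rw [add_comm y x]
  rcases lt_trichotomy x y with h | h | h
  · simp [h, h.not_gt, h.ne']
  · subst h; norm_num
  · simp [h, h.not_gt, h.ne']

/-- The payoff of a candidate does not depend on which of the two platforms is the
candidate's own. -/
lemma U_comm (F : ℝ → ℝ) (u : ℝ → ℝ → ℝ) (t x y : ℝ) : U F u t x y = U F u t y x := by
  have h1 := one_sub_P F x y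
  have h2 := one_sub_P F y x
  unfold U
  rw [h1, h2]; ring

lemma brR_eq_brL (F : ℝ → ℝ) (u : ℝ → ℝ → ℝ) (t x : ℝ) : brR F u t x = brL F u t x := by
  unfold brR brL
  simp only [U_comm F u t x]

lemma U_eq (F : ℝ → ℝ) (u : ℝ → ℝ → ℝ) (t x y : ℝ) :
    U F u t x y = u y t + P F x y * (u x t - u y t) := by
  unfold U; ring

lemma P_pos {F : ℝ → ℝ} (hF : Fhyp F) {x y : ℝ} (hx : x ∈ T) (hy : y ∈ T) : 0 < P F x y := by
  obtain ⟨-, hm, hb⟩ := hF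
  have hm01 : (x + y) / 2 ∈ T := ⟨by linarith [hx.1, hy.1], by linarith [hx.2, hy.2]⟩
  have h0 : (0 : ℝ) ∈ T := ⟨le_rfl, zero_le_one⟩
  have h1 : (1 : ℝ) ∈ T := ⟨zero_le_one, le_rfl⟩
  unfold P
  split_ifs with h h'
  · have := hm h0 hm01 (by linarith [hx.1])
    linarith [(hb 0 h0).1]
  · norm_num
  · have hlt : y < x := lt_of_le_of_ne (not_lt.1 h) (Ne.symm h')
    have := hm hm01 h1 (by linarith [hx.2])
    linarith [(hb 1 h1).2]

/-- Moving strictly towards the ideal policy, or onto it, raises the payoff from the policy. -/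
lemma u_lt {u : ℝ → ℝ → ℝ} (hu : uhyp u) {t b y : ℝ} (ht : t ∈ T) (hy : y ∈ T)
    (h : (t ≤ b ∧ b < y) ∨ (y < b ∧ b ≤ t)) : u y t < u b t := by
  obtain ⟨-, hc, hp⟩ := hu
  have hyt : y ≠ t := by
    rcases h with h | h
    · exact (h.1.trans_lt h.2).ne'
    · exact (h.1.trans_le h.2).ne
  rcases eq_or_ne b t with rfl | hbt
  · exact hp _ ht _ hy hyt
  have hlt := hp t ht y hy hyt
  have key : ∀ z ∈ openSegment ℝ t y, u y t < u z t := by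
    intro z hz
    have := (hc t ht).lt_on_openSegment ht hy hyt.symm hz
    simpa [min_eq_right hlt.le] using this
  apply key
  rcases h with h | h
  · rw [openSegment_eq_Ioo (h.1.trans_lt h.2)]
    exact ⟨lt_of_le_of_ne h.1 (Ne.symm hbt), h.2⟩
  · rw [openSegment_symm, openSegment_eq_Ioo (h.1.trans_le h.2)]
    exact ⟨h.1, lt_of_le_of_ne h.2 hbt⟩

/-- When the best-responding candidate's ideal policy differs from the opponent's platform,
all best responses are strictly better than conceding the opponent's platform. -/
lemma u_br_gt {F : ℝ → ℝ} {u : ℝ → ℝ → ℝ} (hF : Fhyp F) (hu : uhyp u) {t y b : ℝ}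
    (ht : t ∈ T) (hy : y ∈ T) (hty : y ≠ t) (hb : b ∈ brL F u t y) :
    u y t < u b t := by
  have h := hb.2 t ht
  rw [U_eq, U_eq] at h
  have h1 := mul_pos (P_pos hF ht hy) (sub_pos.2 (hu.2.2 t ht y hy hty))
  by_contra! hc
  have := mul_nonpos_of_nonneg_of_nonpos (P_pos hF hb.1 hy).le (sub_nonpos.2 hc)
  linarith

lemma br_range_lt {F : ℝ → ℝ} {u : ℝ → ℝ → ℝ} (hF : Fhyp F) (hu : uhyp u) {t y b : ℝ}
    (ht : t ∈ T) (hy : y ∈ T) (hty : t < y) (hb : b ∈ brL F u t y) : t ≤ b ∧ b < y := by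
  have hg := u_br_gt hF hu ht hy hty.ne' hb
  have hby : b < y := by
    by_contra! hc
    rcases hc.eq_or_lt with h | h
    · rw [h] at hg; exact lt_irrefl _ hg
    · exact lt_asymm hg (u_lt hu ht hb.1 (Or.inl ⟨hty.le, h⟩))
  refine ⟨?_, hby⟩
  by_contra! hbt
  -- moving from `b` to `t` raises both the winning probability and the policy payoff
  have h := hb.2 t ht
  rw [U_eq, U_eq] at h
  have h1 := hu.2.2 t ht b hb.1 hbt.ne
  have hP : P F b y < P F t y := by
    unfold P
    rw [if_pos hby, if_pos hty]
    refine hF.2.1 ⟨?_, ?_⟩ ⟨?_, ?_⟩ ?_ <;> linarith [hb.1.1, hb.1.2, hy.1, hy.2, ht.1, ht.2]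
  have := mul_lt_mul hP (by linarith : u b t - u y t ≤ u t t - u y t) (by linarith)
    (P_pos hF ht hy).le
  linarith

lemma br_range_gt {F : ℝ → ℝ} {u : ℝ → ℝ → ℝ} (hF : Fhyp F) (hu : uhyp u) {t y b : ℝ}
    (ht : t ∈ T) (hy : y ∈ T) (hty : y < t) (hb : b ∈ brL F u t y) : y < b ∧ b ≤ t := by
  have hg := u_br_gt hF hu ht hy hty.ne hb
  have hby : y < b := by
    by_contra! hc
    rcases hc.eq_or_lt with h | h
    · rw [h] at hg; exact lt_irrefl _ hg
    · exact lt_asymm hg (u_lt hu ht hb.1 (Or.inr ⟨h, hty.le⟩))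
  refine ⟨hby, ?_⟩
  by_contra! hbt
  have h := hb.2 t ht
  rw [U_eq, U_eq] at h
  have h1 := hu.2.2 t ht b hb.1 hbt.ne'
  have hP : P F b y < P F t y := by
    rw [← one_sub_P F y b, ← one_sub_P F y t]
    unfold P
    rw [if_pos hby, if_pos hty]
    apply sub_lt_sub_left
    refine hF.2.1 ⟨?_, ?_⟩ ⟨?_, ?_⟩ ?_ <;> linarith [hb.1.1, hb.1.2, hy.1, hy.2, ht.1, ht.2]
  have := mul_lt_mul hP (by linarith : u b t - u y t ≤ u t t - u y t) (by linarith)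
    (P_pos hF ht hy).le
  linarith

lemma br_range_eq {F : ℝ → ℝ} {u : ℝ → ℝ → ℝ} (hF : Fhyp F) (hu : uhyp u) {t b : ℝ}
    (ht : t ∈ T) (hb : b ∈ brL F u t t) : b = t := by
  by_contra hc
  have h := hb.2 t ht
  rw [U_eq, U_eq] at h
  have := mul_pos (P_pos hF hb.1 ht) (sub_pos.2 (hu.2.2 t ht b hb.1 hc))
  linarith

/-- Best responses exist: the payoff is continuous on each side of the opponent's platform `y`,
the jump of the winning probability at `y` being multiplied by `u x t - u y t = 0`. -/
lemma br_nonempty {F : ℝ → ℝ} {u : ℝ → ℝ → ℝ} (hF : Fhyp F) (hu : uhyp u) {t y : ℝ}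
    (ht : t ∈ T) (hy : y ∈ T) : ∃ b, b ∈ brL F u t y := by
  have hU : ContinuousOn (fun x => u x t) T :=
    hu.1.comp (f := fun x : ℝ => (x, t)) (by fun_prop) (fun x hx => ⟨hx, ht⟩)
  have hFc : ContinuousOn (fun x => F ((x + y) / 2)) T :=
    hF.1.comp (f := fun x : ℝ => (x + y) / 2) (by fun_prop)
      (fun x hx => ⟨by linarith [hx.1, hy.1], by linarith [hx.2, hy.2]⟩)
  have hs1 : Icc 0 y ⊆ T := Icc_subset_Icc le_rfl hy.2
  have hs2 : Icc y 1 ⊆ T := Icc_subset_Icc hy.1 le_rfl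
  have c1 : ContinuousOn (fun x => U F u t x y) (Icc 0 y) := by
    have : ContinuousOn (fun x => u y t + F ((x + y) / 2) * (u x t - u y t)) (Icc 0 y) :=
      continuousOn_const.add ((hFc.mono hs1).mul ((hU.mono hs1).sub continuousOn_const))
    refine this.congr fun x hx => ?_
    simp only [U_eq]
    rcases hx.2.eq_or_lt with h | h
    · simp [h]
    · simp [P, h]
  have c2 : ContinuousOn (fun x => U F u t x y) (Icc y 1) := by
    have : ContinuousOn (fun x => u y t + (1 - F ((x + y) / 2)) * (u x t - u y t)) (Icc y 1) :=
      continuousOn_const.add ((continuousOn_const.sub (hFc.mono hs2)).mul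
        ((hU.mono hs2).sub continuousOn_const))
    refine this.congr fun x hx => ?_
    simp only [U_eq]
    rcases hx.1.eq_or_lt with h | h
    · simp [h]
    · simp [P, h.not_gt, h.ne']
  obtain ⟨a, ha, hamax⟩ := isCompact_Icc.exists_isMaxOn ⟨y, hy.1, le_rfl⟩ c1
  obtain ⟨b, hb, hbmax⟩ := isCompact_Icc.exists_isMaxOn ⟨y, le_rfl, hy.2⟩ c2
  have ha' : ∀ z ∈ Icc 0 y, U F u t z y ≤ U F u t a y := fun z hz => hamax hz
  have hb' : ∀ z ∈ Icc y 1, U F u t z y ≤ U F u t b y := fun z hz => hbmax hz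
  rcases le_total (U F u t a y) (U F u t b y) with h | h
  · refine ⟨b, hs2 hb, fun z hz => ?_⟩
    rcases le_total z y with hzy | hzy
    · exact (ha' z ⟨hz.1, hzy⟩).trans h
    · exact hb' z ⟨hzy, hz.2⟩
  · refine ⟨a, hs1 ha, fun z hz => ?_⟩
    rcases le_total z y with hzy | hzy
    · exact ha' z ⟨hz.1, hzy⟩
    · exact (hb' z ⟨hzy, hz.2⟩).trans h

lemma E_order {F : ℝ → ℝ} {u : ℝ → ℝ → ℝ} (hF : Fhyp F) (hu : uhyp u) {tl tr : ℝ}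
    (htl : tl ∈ T) (htr : tr ∈ T) (hlr : tl < tr) {p : ℝ × ℝ} (hp : p ∈ E F u tl tr) :
    tl ≤ p.1 ∧ p.1 < p.2 ∧ p.2 ≤ tr := by
  obtain ⟨h1, h2⟩ := hp
  rw [brR_eq_brL] at h2
  have m1 := h1.1
  have m2 := h2.1
  have r_of_lt := fun h : p.1 < tr => br_range_gt hF hu htr m1 h h2
  rcases lt_trichotomy tl p.2 with h | h | h
  · obtain ⟨a, b⟩ := br_range_lt hF hu htl m2 h h1
    rcases lt_trichotomy p.1 tr with h' | h' | h'
    · exact ⟨a, b, (r_of_lt h').2⟩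
    · rw [h'] at h2
      have := br_range_eq hF hu htr h2
      linarith
    · have := br_range_lt hF hu htr m1 h' h2
      linarith
  · rw [← h] at h1
    have := br_range_eq hF hu htl h1
    have := (r_of_lt (by linarith)).1
    linarith
  · obtain ⟨a, b⟩ := br_range_gt hF hu htl m2 h h1
    have := (r_of_lt (by linarith)).1
    linarith

/-! ### Monotonicity of best responses -/

lemma brL_mono {F : ℝ → ℝ} {u : ℝ → ℝ → ℝ} (hF : Fhyp F) (hu : uhyp u) (hS : SSCP F u)
    {t y y' b b' : ℝ} (ht : t ∈ T) (hy : y ∈ T) (hy' : y' ∈ T) (hty : t < y) (hyy : y < y')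
    (hb : b ∈ brL F u t y) (hb' : b' ∈ brL F u t y') : b ≤ b' := by
  by_contra! hc
  have r := br_range_lt hF hu ht hy hty hb
  have r' := br_range_lt hF hu ht hy' (hty.trans hyy) hb'
  have := (hS t b' b y y' 1 ht hb'.1 hb.1 hy hy' ⟨zero_le_one, le_rfl⟩ r'.1 hc r.2 hyy hy'.2).1
    (hb.2 b' hb'.1)
  exact absurd (hb'.2 b hb.1) (not_le.2 this)

lemma brR_mono {F : ℝ → ℝ} {u : ℝ → ℝ → ℝ} (hF : Fhyp F) (hu : uhyp u) (hS : SSCP F u)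
    {t x x' c c' : ℝ} (ht : t ∈ T) (hx : x ∈ T) (hx' : x' ∈ T) (hxx : x < x') (hxt : x' < t)
    (hc : c ∈ brR F u t x) (hc' : c' ∈ brR F u t x') : c ≤ c' := by
  by_contra! hlt
  have r := br_range_gt hF hu ht hx (hxx.trans hxt) (brR_eq_brL F u t x ▸ hc)
  have r' := br_range_gt hF hu ht hx' hxt (brR_eq_brL F u t x' ▸ hc')
  have := (hS 0 x x' c' c t ⟨le_rfl, zero_le_one⟩ hx hx' hc'.1 hc.1 ht hx.1 hxx r'.1 hlt r.2).2
    (hc'.2 c hc.1)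
  exact absurd (hc.2 c' hc'.1) (not_le.2 this)

/-- If the gain ratio of `b` over `b'` is strictly larger for `t'` than for `t`, and `b` is at
least as good as `b'` for `t`, then `b` is strictly better than `b'` for `t'`. -/
lemma U_lt_of_ratio {F : ℝ → ℝ} {u : ℝ → ℝ → ℝ} {t t' y b b' : ℝ}
    (hP : 0 < P F b y) (h1 : 0 < u b' t - u y t) (h2 : 0 < u b' t' - u y t')
    (hr : (u b t' - u y t') / (u b' t' - u y t') > (u b t - u y t) / (u b' t - u y t))
    (h : U F u t b' y ≤ U F u t b y) : U F u t' b' y < U F u t' b y := by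
  rw [U_eq, U_eq] at h ⊢
  have e : P F b' y ≤ P F b y * ((u b t - u y t) / (u b' t - u y t)) := by
    rw [← mul_div_assoc, le_div_iff₀ h1]; linarith
  have e' : P F b' y < P F b y * ((u b t' - u y t') / (u b' t' - u y t')) :=
    e.trans_lt (mul_lt_mul_of_pos_left hr hP)
  rw [← mul_div_assoc, lt_div_iff₀ h2] at e'
  linarith

lemma brL_mono_type {F : ℝ → ℝ} {u : ℝ → ℝ → ℝ} (hF : Fhyp F) (hu : uhyp u) (hS : SLS u)
    {t t' y b b' : ℝ} (ht : t ∈ T) (ht' : t' ∈ T) (hy : y ∈ T) (htt : t < t') (hty : t' < y)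
    (hb : b ∈ brL F u t y) (hb' : b' ∈ brL F u t' y) : b ≤ b' := by
  by_contra! hc
  have r := br_range_lt hF hu ht hy (htt.trans hty) hb
  have r' := br_range_lt hF hu ht' hy hty hb'
  have := U_lt_of_ratio (P_pos hF hb.1 hy)
    (sub_pos.2 (u_lt hu ht hy (Or.inl ⟨htt.le.trans r'.1, r'.2⟩)))
    (sub_pos.2 (u_lt hu ht' hy (Or.inl r')))
    (hS t t' b' b y ht ht' hb'.1 hb.1 hy (Or.inl ⟨htt, r'.1, hc, r.2⟩)) (hb.2 b' hb'.1)
  exact absurd (hb'.2 b hb.1) (not_le.2 this)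

lemma brR_mono_type {F : ℝ → ℝ} {u : ℝ → ℝ → ℝ} (hF : Fhyp F) (hu : uhyp u) (hS : SLS u)
    {t t' y b b' : ℝ} (ht : t ∈ T) (ht' : t' ∈ T) (hy : y ∈ T) (htt : t < t') (hty : y < t)
    (hb : b ∈ brR F u t y) (hb' : b' ∈ brR F u t' y) : b ≤ b' := by
  rw [brR_eq_brL] at hb hb'
  by_contra! hc
  have r := br_range_gt hF hu ht hy hty hb
  have r' := br_range_gt hF hu ht' hy (hty.trans htt) hb'
  have := U_lt_of_ratio (P_pos hF hb.1 hy)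
    (sub_pos.2 (u_lt hu ht hy (Or.inr ⟨r'.1, hc.le.trans r.2⟩)))
    (sub_pos.2 (u_lt hu ht' hy (Or.inr r')))
    (hS t t' b' b y ht ht' hb'.1 hb.1 hy (Or.inr ⟨r'.1, hc, r.2, htt⟩)) (hb.2 b' hb'.1)
  exact absurd (hb'.2 b hb.1) (not_le.2 this)

/-! ### Equilibria below a given pair of platforms -/

/-- Tarski's fixed point theorem on a real interval. -/
lemma exists_fixed {a b : ℝ} (hab : a ≤ b) (f : ℝ → ℝ)
    (hmap : ∀ x ∈ Icc a b, f x ∈ Icc a b)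
    (hmono : ∀ x ∈ Icc a b, ∀ x' ∈ Icc a b, x < x' → f x ≤ f x') :
    ∃ x ∈ Icc a b, f x = x := by
  have hmono' : ∀ x ∈ Icc a b, ∀ x' ∈ Icc a b, x ≤ x' → f x ≤ f x' := by
    intro x hx x' hx' h
    rcases h.eq_or_lt with rfl | h
    · exact le_rfl
    · exact hmono x hx x' hx' h
  let S : Set ℝ := {x ∈ Icc a b | x ≤ f x}
  have haS : a ∈ S := ⟨⟨le_rfl, hab⟩, (hmap a ⟨le_rfl, hab⟩).1⟩
  have hbd : BddAbove S := ⟨b, fun x hx => hx.1.2⟩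
  have hs : sSup S ∈ Icc a b := ⟨le_csSup hbd haS, csSup_le ⟨a, haS⟩ fun x hx => hx.1.2⟩
  have h1 : sSup S ≤ f (sSup S) := csSup_le ⟨a, haS⟩ fun x hx =>
    hx.2.trans (hmono' x hx.1 _ hs (le_csSup hbd hx))
  have h2 : f (sSup S) ≤ sSup S :=
    le_csSup hbd ⟨hmap _ hs, hmono' _ hs _ (hmap _ hs) h1⟩
  exact ⟨_, hs, le_antisymm h2 h1⟩

/-- If each candidate has a best response to `q` that lies below `q`, then there is an
equilibrium below `q`. -/
lemma exists_eq_le {F : ℝ → ℝ} {u : ℝ → ℝ → ℝ} (hF : Fhyp F) (hu : uhyp u) (hS : SSCP F u)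
    {tl tr : ℝ} (htl : tl ∈ T) (htr : tr ∈ T) {q : ℝ × ℝ} (hq2 : q.2 ∈ T)
    (hl : tl ≤ q.1) (hr : q.1 < tr)
    (hbl : ∃ b ∈ brL F u tl q.2, b ≤ q.1) (hbr : ∃ c ∈ brR F u tr q.1, c ≤ q.2) :
    ∃ p ∈ E F u tl tr, p ≤ q := by
  have exL : ∀ y, ∃ b, y ∈ T → b ∈ brL F u tl y ∧ (y = q.2 → b ≤ q.1) := by
    intro y
    by_cases hy : y ∈ T
    · by_cases h : y = q.2
      · subst h
        obtain ⟨b, hb, h⟩ := hbl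
        exact ⟨b, fun _ => ⟨hb, fun _ => h⟩⟩
      · obtain ⟨b, hb⟩ := br_nonempty hF hu htl hy
        exact ⟨b, fun _ => ⟨hb, fun e => absurd e h⟩⟩
    · exact ⟨0, fun h => absurd h hy⟩
  have exR : ∀ x, ∃ c, x ∈ T → c ∈ brR F u tr x ∧ (x = q.1 → c ≤ q.2) := by
    intro x
    by_cases hx : x ∈ T
    · by_cases h : x = q.1
      · subst h
        obtain ⟨c, hc, h⟩ := hbr
        exact ⟨c, fun _ => ⟨hc, fun _ => h⟩⟩
      · obtain ⟨c, hc⟩ := br_nonempty hF hu htr hx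
        exact ⟨c, fun _ => ⟨brR_eq_brL F u tr x ▸ hc, fun e => absurd e h⟩⟩
    · exact ⟨0, fun h => absurd h hx⟩
  choose sl hsl using exL
  choose sr hsr using exR
  have hT : ∀ x ∈ Icc tl q.1, x ∈ T := fun x hx =>
    ⟨htl.1.trans hx.1, hx.2.trans (hr.le.trans htr.2)⟩
  have srT : ∀ x ∈ Icc tl q.1, sr x ∈ T := fun x hx => (hsr x (hT x hx)).1.1
  have sr_gt : ∀ x ∈ Icc tl q.1, tl < sr x := fun x hx =>
    hx.1.trans_lt (br_range_gt hF hu htr (hT x hx) (hx.2.trans_lt hr)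
      (brR_eq_brL F u tr x ▸ (hsr x (hT x hx)).1)).1
  have sr_mono : ∀ x ∈ Icc tl q.1, ∀ x' ∈ Icc tl q.1, x ≤ x' → sr x ≤ sr x' := by
    intro x hx x' hx' h
    rcases h.eq_or_lt with rfl | h
    · exact le_rfl
    · exact brR_mono hF hu hS htr (hT x hx) (hT x' hx') h (hx'.2.trans_lt hr)
        (hsr x (hT x hx)).1 (hsr x' (hT x' hx')).1
  have sl_mono : ∀ y ∈ T, ∀ y' ∈ T, tl < y → y ≤ y' → sl y ≤ sl y' := by
    intro y hy y' hy' ht h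
    rcases h.eq_or_lt with rfl | h
    · exact le_rfl
    · exact brL_mono hF hu hS htl hy hy' ht h (hsl y hy).1 (hsl y' hy').1
  have hq : q.1 ∈ Icc tl q.1 := ⟨hl, le_rfl⟩
  have sr_le : ∀ x ∈ Icc tl q.1, sr x ≤ q.2 := fun x hx =>
    (sr_mono x hx _ hq hx.2).trans ((hsr _ (hT _ hq)).2 rfl)
  obtain ⟨x, hx, hfx⟩ := exists_fixed hl (fun x => sl (sr x))
    (fun x hx => ⟨(br_range_lt hF hu htl (srT x hx) (sr_gt x hx) (hsl _ (srT x hx)).1).1,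
      (sl_mono _ (srT x hx) _ hq2 (sr_gt x hx) (sr_le x hx)).trans ((hsl _ hq2).2 rfl)⟩)
    (fun x hx x' hx' h =>
      sl_mono _ (srT x hx) _ (srT x' hx') (sr_gt x hx) (sr_mono x hx x' hx' h.le))
  refine ⟨(x, sr x), ⟨?_, (hsr x (hT x hx)).1⟩, hx.2, sr_le x hx⟩
  have := (hsl _ (srT x hx)).1
  rwa [show sl (sr x) = x from hfx] at this

/-- Under SSCP and SLS, the least equilibrium platforms are increasing in the
candidates' ideal policies. -/
theorem least_equilibrium_monotone (F : ℝ → ℝ) (u : ℝ → ℝ → ℝ)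
    (hF : Fhyp F) (hu : uhyp u) (hSSCP : SSCP F u) (hSLS : SLS u)
    (tl tl' tr tr' : ℝ)
    (htl : tl ∈ T) (htl' : tl' ∈ T) (htr : tr ∈ T) (htr' : tr' ∈ T)
    (h1 : tl < tl') (h2 : tl' < tr) (h3 : tr < tr')
    (xb yb zb : ℝ × ℝ)
    (hx : IsLeast (E F u tl tr) xb)
    (hy : IsLeast (E F u tl' tr) yb)
    (hz : IsLeast (E F u tl tr') zb) :
    yb.1 ≥ xb.1 ∧ zb.2 ≥ xb.2 := by
  constructor
  · obtain ⟨a, b, c⟩ := E_order hF hu htl' htr h2 hy.1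
    have m2 : yb.2 ∈ T := hy.1.2.1
    obtain ⟨b0, hb0⟩ := br_nonempty hF hu htl m2
    obtain ⟨p, hp, hpq⟩ := exists_eq_le hF hu hSSCP htl htr m2 (h1.le.trans a) (b.trans_le c)
      ⟨b0, hb0, brL_mono_type hF hu hSLS htl htl' m2 h1 (a.trans_lt b) hb0 hy.1.1⟩
      ⟨yb.2, hy.1.2, le_rfl⟩
    exact (hx.2 hp).1.trans hpq.1
  · have h12 := h1.trans h2
    obtain ⟨a, b, c⟩ := E_order hF hu htl htr' (h12.trans h3) hz.1
    have m1 : zb.1 ∈ T := hz.1.1.1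
    rcases lt_or_ge zb.1 tr with h | h
    · obtain ⟨c0, hc0⟩ := br_nonempty hF hu htr m1
      rw [← brR_eq_brL] at hc0
      obtain ⟨p, hp, hpq⟩ := exists_eq_le hF hu hSSCP htl htr hz.1.2.1 a h
        ⟨zb.1, hz.1.1, le_rfl⟩
        ⟨c0, hc0, brR_mono_type hF hu hSLS htr htr' m1 h3 h hc0 hz.1.2⟩
      exact (hx.2 hp).2.trans hpq.2
    · have := (E_order hF hu htl htr h12 hx.1).2.2
      linarith
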